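/- (Hedges are confined to the intervention slice in the static case.) Let D be a DCN with static hidden confounders, and let X ⊆ V_{t_x} and Y ⊆ V_{t_y} for two time slices t_x < t_y. If there is a hedge H for P(Y|do(X)) in D, then H ⊆ V_{t_x}, i.e., the hedge lies entirely within time slice t_x. -/

import Mathlib

/-- A causal graph over a set `V` of observed variables: directed edges between
observed variables, and bidirected edges (`conf`) representing hidden confounders. -/
structure CausalGraph (V : Type) where
  edge : V → V → Prop
  conf : V → V → Prop

namespace CausalGraph

variable {V : Type}

/-- `i` is a (strict) ancestor of `j` in `G`. -/
def Anc (G : CausalGraph V) (i j : V) : Prop :=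
  Relation.TransGen G.edge i j

/-- Symmetrized bidirected adjacency (presence of a hidden confounder). -/
def Bid (G : CausalGraph V) (i j : V) : Prop :=
  G.conf i j ∨ G.conf j i

/-- The mutilated graph `G_{X̄}`: all edges with an arrowhead into `X` removed. -/
def cutIn (G : CausalGraph V) (X : Set V) : CausalGraph V where
  edge := fun i j => G.edge i j ∧ j ∉ X
  conf := fun i j => G.conf i j ∧ i ∉ X ∧ j ∉ X

/-- The mutilated graph `G_{X̲}`: all directed edges leaving `X` removed. -/
def cutOut (G : CausalGraph V) (X : Set V) : CausalGraph V where
  edge := fun i j => G.edge i j ∧ i ∉ X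
  conf := G.conf

/-- Active walks used to define d-separation: `DConn G W x h y` holds iff there is a
walk from `x` to `y` which is active given the conditioning set `W` (every interior
collider belongs to `W` and every interior non-collider avoids `W`), and whose last
edge has an arrowhead at `y` iff `h = true`. -/
inductive DConn (G : CausalGraph V) (W : Set V) : V → Bool → V → Prop
  | dir {x y : V} : G.edge x y → DConn G W x true y
  | rev {x y : V} : G.edge y x → DConn G W x false y
  | bid {x y : V} : G.Bid x y → DConn G W x true y
  | step_out {x v y : V} {h : Bool} :
      DConn G W x h v → v ∉ W → G.edge v y → DConn G W x true y
  | step_in_col {x v y : V} :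
      DConn G W x true v → v ∈ W → G.edge y v → DConn G W x false y
  | step_in_non {x v y : V} :
      DConn G W x false v → v ∉ W → G.edge y v → DConn G W x false y
  | step_bid_col {x v y : V} :
      DConn G W x true v → v ∈ W → G.Bid v y → DConn G W x true y
  | step_bid_non {x v y : V} :
      DConn G W x false v → v ∉ W → G.Bid v y → DConn G W x true y

/-- `Y` and `Z` are d-separated by the conditioning set `W` in `G`. -/
def DSep (G : CausalGraph V) (W Y Z : Set V) : Prop :=
  ∀ y ∈ Y, ∀ z ∈ Z, ∀ h : Bool, ¬ DConn G W y h z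

/-- The set of (reflexive) ancestors of the set `Y` in `G`. -/
def AnSet (G : CausalGraph V) (Y : Set V) : Set V :=
  {v | ∃ y ∈ Y, Relation.ReflTransGen G.edge v y}

/-- `F` is an `R`-rooted C-forest in `G`: the nodes of `F` form a single
C-component (pairwise connected by paths consisting entirely of bidirected edges
within `F`), every node of `F` has at most one child in `F`, and `R` is the set of
childless nodes of `F`. -/
def IsCForest (G : CausalGraph V) (F R : Set V) : Prop :=
  (∀ a ∈ F, ∀ b ∈ F,
      Relation.ReflTransGen (fun u w => G.Bid u w ∧ u ∈ F ∧ w ∈ F) a b) ∧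
  (∀ a ∈ F, ∀ b ∈ F, ∀ c ∈ F, G.edge a b → G.edge a c → b = c) ∧
  R = {a | a ∈ F ∧ ∀ b ∈ F, ¬ G.edge a b}

/-- The `R`-rooted C-forests `F, F'` form a hedge for `P(Y | do(X))` in `G`:
`F'` is a subgraph of `F`, `X` occurs only in `F` (`X ∩ F ≠ ∅`, `X ∩ F' = ∅`), and
`R ⊆ An(Y)` in the graph with all edges into `X` removed. -/
def IsHedge (G : CausalGraph V) (X Y F F' R : Set V) : Prop :=
  G.IsCForest F R ∧ G.IsCForest F' R ∧ F' ⊆ F ∧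
  (X ∩ F).Nonempty ∧ X ∩ F' = ∅ ∧ R ⊆ (G.cutIn X).AnSet Y

/-- There is a hedge for `P(Y | do(X))` in `G`. -/
def Hedge (G : CausalGraph V) (X Y : Set V) : Prop :=
  ∃ F F' R, G.IsHedge X Y F F' R

/-- The subgraph of `G` induced on the vertex set `A`. -/
def restrict (G : CausalGraph V) (A : Set V) : CausalGraph V where
  edge := fun i j => G.edge i j ∧ i ∈ A ∧ j ∈ A
  conf := fun i j => G.conf i j ∧ i ∈ A ∧ j ∈ A

end CausalGraph

/-- A dynamic causal network: a causal graph whose variables are assigned to integer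
time slices; directed edges stay within a time slice or point into the next time
slice (causes precede effects). -/
structure DCN (V : Type) extends CausalGraph V where
  slice : V → ℤ
  edge_slice : ∀ i j, edge i j → slice j = slice i ∨ slice j = slice i + 1

section StaticConfounders

variable {V : Type} {ι : Type*} {G : CausalGraph V} {slice : V → ι}

theorem CausalGraph.Bid.slice_eq (hstatic : ∀ i j, G.conf i j → slice i = slice j)
    {i j : V} (hij : G.Bid i j) : slice i = slice j :=
  hij.elim (hstatic i j) fun hji => (hstatic j i hji).symm

theorem CausalGraph.IsCForest.slice_eq (hstatic : ∀ i j, G.conf i j → slice i = slice j)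
    {F R : Set V} (hF : G.IsCForest F R) {a b : V} (ha : a ∈ F) (hb : b ∈ F) :
    slice a = slice b := by
  have hpath : Relation.ReflTransGen (· = ·) (slice a) (slice b) :=
    (hF.1 a ha b hb).lift slice fun _ _ hstep => hstep.1.slice_eq hstatic
  rwa [Relation.reflTransGen_eq_self] at hpath

theorem dcn_static_hedge_within_slice_general
    (hstatic : ∀ i j, G.conf i j → slice i = slice j) {t : ι} {X Y F F' R : Set V}
    (hX : X ⊆ {v | slice v = t}) (hhedge : G.IsHedge X Y F F' R) :
    F ∪ F' ⊆ {v | slice v = t} := by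
  obtain ⟨hF, _, hF'F, ⟨x, hxX, hxF⟩, _, _⟩ := hhedge
  rw [Set.union_eq_left.mpr hF'F]
  exact fun v hv => (hF.slice_eq hstatic hv hxF).trans (hX hxX)

end StaticConfounders

/-- Hedges are confined to the intervention slice in the static
case.  Let `D` be a DCN with static hidden confounders, and let `X ⊆ V_{t_x}`
and `Y ⊆ V_{t_y}` for two time slices `t_x < t_y`.  If `F, F'` (with root set
`R`) form a hedge for `P(Y | do(X))` in `D`, then the hedge lies entirely within
the time slice `t_x`. -/
theorem dcn_static_hedge_within_slice
    {V : Type} (D : DCN V)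
    (hstatic : ∀ i j, D.conf i j → D.slice i = D.slice j)
    (tx ty : ℤ) (hlt : tx < ty)
    (X Y : Set V)
    (hX : X ⊆ {v | D.slice v = tx})
    (hY : Y ⊆ {v | D.slice v = ty})
    (F F' R : Set V)
    (hhedge : D.toCausalGraph.IsHedge X Y F F' R) :
    F ∪ F' ⊆ {v | D.slice v = tx} :=
  dcn_static_hedge_within_slice_general hstatic hX hhedge
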